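/- Let m ≥ 1 and let C : ℤ^m → [0,∞) satisfy: (i) C is even and C(x) = 0 iff x = 0; (ii) C(x) ≤ C(y) whenever x ⪯ y; (iii') there exists a monotone norm ∥·∥⋆ on ℝ^m such that C(x)/∥x∥⋆ ≤ C(x')/∥x'∥⋆ for all nonzero x', x ∈ ℤ^m with x' ⪯ x; and C(x) = C(x̄) for every x ∈ ℤ^m. Fix positive integers N_1, …, N_m with N := N_1 + … + N_m. Let (A,B) be a good pair in {0,1}^N × {0,1}^N, set c_{A,B} := C(β(A−B)), and let t > 0. If t·(A−B)/c_{A,B} ∈ conv{q_D : D ∈ Ā \ {0}}, then t ≤ 1. Consequently q_{A,B} := (A−B)/c_{A,B} lies on the boundary of conv{q_D : D ∈ Ā \ {0}}. -/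

import Mathlib

/-- `f` is a norm on the real vector space `E`. -/
def IsNorm {E : Type*} [AddCommGroup E] [Module ℝ E] (f : E → ℝ) : Prop :=
  (∀ x, 0 ≤ f x) ∧ (∀ x, f x = 0 ↔ x = 0) ∧
    (∀ x y, f (x + y) ≤ f x + f y) ∧ ∀ (c : ℝ) (x : E), f (c • x) = |c| * f x

/-- The partial order `x ⪯ y` on real vectors. -/
def PreOrd {ι : Type*} (x y : ι → ℝ) : Prop :=
  ∀ j, |x j| ≤ |y j| ∧ 0 ≤ x j * y j

/-- The partial order `x ⪯ y` on integer vectors. -/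
def PreOrdInt {ι : Type*} (x y : ι → ℤ) : Prop :=
  ∀ j, |x j| ≤ |y j| ∧ 0 ≤ x j * y j

/-- `D ∈ Ā`, i.e. all coordinates of `D ∈ ℤ^N` lie in `{-1, 0, 1}`. -/
def inAbar {m : ℕ} {N : Fin m → ℕ} (D : (Σ i : Fin m, Fin (N i)) → ℤ) : Prop :=
  ∀ j, D j = -1 ∨ D j = 0 ∨ D j = 1

/-- `β(v) ∈ ℤ^m`: the vector of block sums of `v ∈ ℤ^N`. -/
def blockSum {m : ℕ} (N : Fin m → ℕ) (v : (Σ i : Fin m, Fin (N i)) → ℤ) :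
    Fin m → ℤ :=
  fun i => ∑ k : Fin (N i), v ⟨i, k⟩

/-- `β(D̄) ∈ ℤ^m`: the vector of block sums of the coordinatewise absolute value of
`D`. -/
def blockAbsSum {m : ℕ} (N : Fin m → ℕ) (D : (Σ i : Fin m, Fin (N i)) → ℤ) :
    Fin m → ℤ :=
  fun i => ∑ k : Fin (N i), |D ⟨i, k⟩|

/-- `c_D := C(β(D̄))`. -/
def cD {m : ℕ} (N : Fin m → ℕ) (C : (Fin m → ℤ) → ℝ)
    (D : (Σ i : Fin m, Fin (N i)) → ℤ) : ℝ :=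
  C (blockAbsSum N D)

/-- `q_D := D / c_D ∈ ℝ^N`. -/
noncomputable def qD {m : ℕ} (N : Fin m → ℕ) (C : (Fin m → ℤ) → ℝ)
    (D : (Σ i : Fin m, Fin (N i)) → ℤ) : (Σ i : Fin m, Fin (N i)) → ℝ :=
  fun j => (D j : ℝ) / cD N C D

/-- `K := conv {q_D : D ∈ Ā \ {0}} ⊆ ℝ^N`. -/
noncomputable def Kconv {m : ℕ} (N : Fin m → ℕ) (C : (Fin m → ℤ) → ℝ) :
    Set ((Σ i : Fin m, Fin (N i)) → ℝ) :=
  convexHull ℝ {v | ∃ D, inAbar D ∧ D ≠ 0 ∧ v = qD N C D}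

/-- `(A, B)` is a good pair: `A, B ∈ {0,1}^N`, `A - B ≠ 0`, and for every block, if
`A` has a nonzero coordinate in the block then `B` vanishes on the whole block, and
vice versa. -/
def GoodPair {m : ℕ} {N : Fin m → ℕ} (A B : (Σ i : Fin m, Fin (N i)) → ℤ) : Prop :=
  (∀ j, A j = 0 ∨ A j = 1) ∧ (∀ j, B j = 0 ∨ B j = 1) ∧ A - B ≠ 0 ∧
    ∀ i : Fin m,
      ((∃ k : Fin (N i), A ⟨i, k⟩ = 1) → ∀ k : Fin (N i), B ⟨i, k⟩ = 0) ∧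
      ((∃ k : Fin (N i), B ⟨i, k⟩ = 1) → ∀ k : Fin (N i), A ⟨i, k⟩ = 0)

theorem block_abs_aux {m : ℕ} {N : Fin m → ℕ} (A B : (Σ i : Fin m, Fin (N i)) → ℤ)
    (hgood : GoodPair A B) (i : Fin m) :
    |blockSum N (A - B) i| = blockAbsSum N (A - B) i := by
  obtain ⟨hA, hB, -, hg⟩ := hgood
  unfold blockSum blockAbsSum
  by_cases h : ∃ k : Fin (N i), A ⟨i, k⟩ = 1
  · have hb := (hg i).1 h
    have h0 : ∀ k : Fin (N i), 0 ≤ (A - B) ⟨i, k⟩ := by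
      intro k
      have := hb k
      have := hA ⟨i, k⟩
      simp only [Pi.sub_apply]
      omega
    rw [abs_of_nonneg (Finset.sum_nonneg fun k _ => h0 k)]
    exact Finset.sum_congr rfl fun k _ => (abs_of_nonneg (h0 k)).symm
  · have h0 : ∀ k : Fin (N i), (A - B) ⟨i, k⟩ ≤ 0 := by
      intro k
      have h1 : A ⟨i, k⟩ ≠ 1 := fun h' => h ⟨k, h'⟩
      have := hA ⟨i, k⟩
      have := hB ⟨i, k⟩
      simp only [Pi.sub_apply]
      omega
    rw [abs_of_nonpos (Finset.sum_nonpos fun k _ => h0 k), ← Finset.sum_neg_distrib]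
    exact Finset.sum_congr rfl fun k _ => (abs_of_nonpos (h0 k)).symm

theorem blockAbs_ne_zero_aux {m : ℕ} {N : Fin m → ℕ} (D : (Σ i : Fin m, Fin (N i)) → ℤ)
    (hD : D ≠ 0) : blockAbsSum N D ≠ 0 := by
  intro h
  apply hD
  funext ⟨i, k⟩
  have h1 := congrFun h i
  simp only [blockAbsSum, Pi.zero_apply] at h1
  rw [Finset.sum_eq_zero_iff_of_nonneg (fun k _ => abs_nonneg _)] at h1
  simpa using h1 k (Finset.mem_univ _)

theorem main_aux {m : ℕ} (C : (Fin m → ℤ) → ℝ)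
    (hC0 : ∀ x, 0 ≤ C x)
    (hzero : ∀ x, C x = 0 ↔ x = 0)
    (hmono : ∀ x y, PreOrdInt x y → C x ≤ C y)
    (nrm : (Fin m → ℝ) → ℝ) (hn : IsNorm nrm)
    (hnm : ∀ x y : Fin m → ℝ, PreOrd x y → nrm x ≤ nrm y)
    (hs : ∀ x x' : Fin m → ℤ, x ≠ 0 → x' ≠ 0 → PreOrdInt x' x →
        C x / nrm (fun i => (x i : ℝ)) ≤ C x' / nrm (fun i => (x' i : ℝ)))
    (N : Fin m → ℕ) (E : (Σ i : Fin m, Fin (N i)) → ℤ) (hE : inAbar E) (hE0 : E ≠ 0)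
    (t : ℝ) (ht : 0 < t) (hmem : t • qD N C E ∈ Kconv N C) : t ≤ 1 := by
  obtain ⟨hn0, hnz, hntri, hnsm⟩ := hn
  have hCpos : ∀ x, x ≠ 0 → 0 < C x := fun x hx =>
    lt_of_le_of_ne (hC0 x) (fun h => hx ((hzero x).1 h.symm))
  have hnpos : ∀ x : Fin m → ℤ, x ≠ 0 → 0 < nrm (fun i => (x i : ℝ)) := by
    intro x hx
    refine lt_of_le_of_ne (hn0 _) (fun h => hx ?_)
    have := (hnz _).1 h.symm
    funext i
    have h2 := congrFun this i
    simpa using h2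
  have hnm' : ∀ x y : Fin m → ℝ, (∀ i, 0 ≤ x i) → (∀ i, x i ≤ y i) → nrm x ≤ nrm y := by
    intro x y h0 h1
    refine hnm _ _ fun j => ⟨abs_le_abs_of_nonneg (h0 j) (h1 j), mul_nonneg (h0 j) ((h0 j).trans (h1 j))⟩
  set b := blockAbsSum N E with hb
  have hb0 : b ≠ 0 := blockAbs_ne_zero_aux E hE0
  set β : ((Σ i : Fin m, Fin (N i)) → ℝ) → (Fin m → ℝ) :=
    fun v i => ∑ k : Fin (N i), max (v ⟨i, k⟩ * (E ⟨i, k⟩ : ℝ)) 0 with hβ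
  set r := nrm (fun i => (b i : ℝ)) / C b with hr
  have hrpos : 0 < r := div_pos (hnpos b hb0) (hCpos b hb0)
  have hβ0 : ∀ v i, 0 ≤ β v i := fun v i => Finset.sum_nonneg fun k _ => le_max_right _ _
  have hβs : ∀ (a : ℝ) v, 0 ≤ a → β (a • v) = a • β v := by
    intro a v ha
    funext i
    simp only [hβ, Pi.smul_apply, smul_eq_mul, Finset.mul_sum]
    refine Finset.sum_congr rfl fun k _ => ?_
    rw [mul_max_of_nonneg _ _ ha, mul_zero, mul_assoc]
  have hβa : ∀ v w i, β (v + w) i ≤ (β v + β w) i := by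
    intro v w i
    simp only [hβ, Pi.add_apply, ← Finset.sum_add_distrib]
    refine Finset.sum_le_sum fun k _ => ?_
    rw [add_mul]
    exact max_le (add_le_add (le_max_left _ _) (le_max_left _ _))
      (add_nonneg (le_max_right _ _) (le_max_right _ _))
  have hconv : Convex ℝ {v | nrm (β v) ≤ r} := by
    intro v hv w hw a c ha hc hac
    simp only [Set.mem_setOf_eq] at hv hw ⊢
    calc nrm (β (a • v + c • w)) ≤ nrm (β (a • v) + β (c • w)) :=
          hnm' _ _ (hβ0 _) (hβa _ _)
      _ ≤ nrm (β (a • v)) + nrm (β (c • w)) := hntri _ _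
      _ = a * nrm (β v) + c * nrm (β w) := by
          rw [hβs a v ha, hβs c w hc, hnsm, hnsm, abs_of_nonneg ha, abs_of_nonneg hc]
      _ ≤ a * r + c * r := by gcongr
      _ = r := by rw [← add_mul, hac, one_mul]
  have hsub : Kconv N C ⊆ {v | nrm (β v) ≤ r} := by
    refine convexHull_min ?_ hconv
    rintro v ⟨D, hD, hD0, rfl⟩
    simp only [Set.mem_setOf_eq]
    have hcD : 0 < C (blockAbsSum N D) := hCpos _ (blockAbs_ne_zero_aux D hD0)
    set g : Fin m → ℤ := fun i => ∑ k : Fin (N i), max (D ⟨i, k⟩ * E ⟨i, k⟩) 0 with hg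
    have hg0 : ∀ i, 0 ≤ g i := fun i => Finset.sum_nonneg fun k _ => le_max_right _ _
    have hgb : ∀ i, g i ≤ b i := by
      intro i
      refine Finset.sum_le_sum fun k _ => ?_
      rcases hD ⟨i, k⟩ with h | h | h <;> rcases hE ⟨i, k⟩ with h' | h' | h' <;> simp [h, h']
    have hgD : ∀ i, g i ≤ blockAbsSum N D i := by
      intro i
      refine Finset.sum_le_sum fun k _ => ?_
      rcases hD ⟨i, k⟩ with h | h | h <;> rcases hE ⟨i, k⟩ with h' | h' | h' <;> simp [h, h']
    have hpre : ∀ y : Fin m → ℤ, (∀ i, g i ≤ y i) → PreOrdInt g y := fun y hy j =>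
      ⟨abs_le_abs_of_nonneg (hg0 j) (hy j), mul_nonneg (hg0 j) ((hg0 j).trans (hy j))⟩
    have hβq : β (qD N C D) = (C (blockAbsSum N D))⁻¹ • (fun i => (g i : ℝ)) := by
      have : qD N C D = (C (blockAbsSum N D))⁻¹ • (fun j => (D j : ℝ)) := by
        funext j
        simp [qD, cD, div_eq_inv_mul]
      rw [this, hβs _ _ (inv_nonneg.2 hcD.le)]
      congr 1
      funext i
      simp [hβ, hg]
    rw [hβq, hnsm, abs_of_nonneg (inv_nonneg.2 hcD.le)]
    by_cases hgz : g = 0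
    · have : nrm (fun i => (g i : ℝ)) = 0 := by
        rw [hnz]; funext i; simp [hgz]
      rw [this, mul_zero]
      exact hrpos.le
    · have h1 := hs b g hb0 hgz (hpre b hgb)
      have h2 := hmono g _ (hpre _ hgD)
      have hCg := hCpos g hgz
      have hng := hnpos g hgz
      have hCb := hCpos b hb0
      have hnb := hnpos b hb0
      rw [div_le_div_iff₀ hnb hng] at h1
      rw [hr, ← div_eq_inv_mul, div_le_div_iff₀ hcD hCb, mul_comm]
      refine h1.trans ?_
      rw [mul_comm]
      gcongr
  have hfin := hsub hmem
  simp only [Set.mem_setOf_eq] at hfin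
  have hCb := hCpos b hb0
  have hβE : β (qD N C E) = (C b)⁻¹ • (fun i => (b i : ℝ)) := by
    have : qD N C E = (C b)⁻¹ • (fun j => (E j : ℝ)) := by
      funext j
      simp [qD, cD, div_eq_inv_mul, hb]
    rw [this, hβs _ _ (inv_nonneg.2 hCb.le)]
    congr 1
    funext i
    simp only [hβ, hb, blockAbsSum, Int.cast_sum]
    refine Finset.sum_congr rfl fun k _ => ?_
    rcases hE ⟨i, k⟩ with h' | h' | h' <;> simp [h']
  rw [hβs _ _ ht.le, hnsm, abs_of_pos ht, hβE, hnsm, abs_of_nonneg (inv_nonneg.2 hCb.le),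
    ← div_eq_inv_mul, ← hr] at hfin
  by_contra hlt
  push Not at hlt
  nlinarith

/-- Let `C : ℤ^m → [0,∞)` satisfy (i), (ii), (iii') and
`C(x) = C(x̄)`. If `(A, B)` is a good pair, `c_{A,B} := C(β(A-B))`, and `t > 0` is
such that `t·(A-B)/c_{A,B}` belongs to `conv {q_D : D ∈ Ā \ {0}}`, then `t ≤ 1`.
Consequently `q_{A,B} := (A-B)/c_{A,B}` lies on the boundary of
`conv {q_D : D ∈ Ā \ {0}}`. -/
theorem good_pair_on_boundary {m : ℕ} (hm : 1 ≤ m)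
    (C : (Fin m → ℤ) → ℝ)
    (hC0 : ∀ x, 0 ≤ C x)
    (heven : ∀ x, C (-x) = C x)
    (hzero : ∀ x, C x = 0 ↔ x = 0)
    (hmono : ∀ x y, PreOrdInt x y → C x ≤ C y)
    (hsublin : ∃ nrmStar : (Fin m → ℝ) → ℝ, IsNorm nrmStar ∧
      (∀ x y : Fin m → ℝ, PreOrd x y → nrmStar x ≤ nrmStar y) ∧
      ∀ x x' : Fin m → ℤ, x ≠ 0 → x' ≠ 0 → PreOrdInt x' x →
        C x / nrmStar (fun i => (x i : ℝ)) ≤ C x' / nrmStar (fun i => (x' i : ℝ)))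
    (hsuper : ∀ x, C x = C fun i => |x i|)
    (N : Fin m → ℕ) (hN : ∀ i, 0 < N i)
    (A B : (Σ i : Fin m, Fin (N i)) → ℤ) (hgood : GoodPair A B) :
    (∀ t : ℝ, 0 < t →
      t • (fun j => (((A - B) j : ℤ) : ℝ) / C (blockSum N (A - B))) ∈ Kconv N C →
      t ≤ 1) ∧
    (fun j => (((A - B) j : ℤ) : ℝ) / C (blockSum N (A - B))) ∈
      frontier (Kconv N C) := by
  obtain ⟨nrm, hn, hnm, hs⟩ := hsublin
  have hE : inAbar (A - B) := by
    intro j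
    have h1 := hgood.1 j
    have h2 := hgood.2.1 j
    simp only [Pi.sub_apply]
    omega
  have hE0 : A - B ≠ 0 := hgood.2.2.1
  have hq : (fun j => (((A - B) j : ℤ) : ℝ) / C (blockSum N (A - B))) = qD N C (A - B) := by
    have : C (blockSum N (A - B)) = C (blockAbsSum N (A - B)) := by
      rw [hsuper]
      congr 1
      funext i
      exact block_abs_aux A B hgood i
    funext j
    simp only [qD, cD, this]
  rw [hq]
  have key := main_aux C hC0 hzero hmono nrm hn hnm hs N (A - B) hE hE0
  refine ⟨key, ?_, ?_⟩
  · exact subset_closure (subset_convexHull ℝ _ ⟨A - B, hE, hE0, rfl⟩)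
  · intro hint
    have hc : Continuous fun t : ℝ => t • qD N C (A - B) := by fun_prop
    have hev : ∀ᶠ t in nhds (1 : ℝ), t • qD N C (A - B) ∈ Kconv N C := by
      apply hc.continuousAt.eventually_mem
      rw [one_smul]
      exact mem_interior_iff_mem_nhds.1 hint
    obtain ⟨ε, hε, hball⟩ := Metric.eventually_nhds_iff.1 hev
    have h1 := hball (y := 1 + ε / 2) (by
      rw [Real.dist_eq, add_sub_cancel_left, abs_of_pos (by positivity)]
      linarith)
    have := key _ (by positivity) h1
    linarith
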